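/- Let μ be a probability measure on [0,∞). Then there exists a probability measure μ₁ on [0,∞) such that for every z in the upper half-plane ℂ⁺, G_{μ₁}(z) = 1/(z·(1 − G_μ(z))); equivalently, in terms of the moment generating function M_μ(z) = ∫ (1 − x·z)⁻¹ dμ(x), one has M_{μ₁}(z) = 1/(1 − z·M_μ(z)). (Note that Im G_μ(z) < 0 for z ∈ ℂ⁺, so G_μ(z) ≠ 1 and the right-hand side is well defined.) -/

import Mathlib

open MeasureTheory

noncomputable section

/-- The Cauchy–Stieltjes transform `G_μ(z) = ∫ (z − x)⁻¹ dμ(x)`. -/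
def cauchyG (μ : Measure ℝ) (z : ℂ) : ℂ := ∫ x, (z - (x : ℂ))⁻¹ ∂μ

open Matrix Filter Topology BoundedContinuousFunction
open scoped ComplexOrder

/-- The factor `A` of the arrow matrix. -/
def arrowFactor {ι : Type} [DecidableEq ι] (w x : ι → ℝ) : Matrix ι (Option ι) ℂ :=
  Matrix.of fun i j => match j with
    | none => ((Real.sqrt (w i) : ℝ) : ℂ)
    | some k => if i = k then ((Real.sqrt (x i) : ℝ) : ℂ) else 0

theorem sub_ofReal_ne_zero {z : ℂ} (hz : 0 < z.im) (x : ℝ) : z - (x : ℂ) ≠ 0 := by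
  intro h
  have := congrArg Complex.im h
  simp at this
  exact hz.ne' this

theorem finite_case {ι : Type} [Fintype ι] [DecidableEq ι] (w x : ι → ℝ)
    (hw : ∀ i, 0 ≤ w i) (hx : ∀ i, 0 ≤ x i) (hsum : ∑ i, w i = 1) :
    ∃ p l : Option ι → ℝ, (∀ k, 0 ≤ p k) ∧ (∀ k, 0 ≤ l k) ∧ ∑ k, p k = 1 ∧ ∑ k, p k * l k = 1 ∧
      ∀ z : ℂ, 0 < z.im → (∑ i, (w i : ℂ) * (z - (x i : ℂ))⁻¹) ≠ 1 →
        ∑ k, (p k : ℂ) * (z - (l k : ℂ))⁻¹ =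
          1 / (z * (1 - ∑ i, (w i : ℂ) * (z - (x i : ℂ))⁻¹)) := by
  set A := arrowFactor w x with hA
  set T := Aᴴ * A with hT
  have hpsd : T.PosSemidef := Matrix.posSemidef_conjTranspose_mul_self A
  have hH : T.IsHermitian := hpsd.1
  have hwsq : ∀ i, ((Real.sqrt (w i) : ℝ) : ℂ) * ((Real.sqrt (w i) : ℝ) : ℂ) = (w i : ℂ) := by
    intro i; rw [← Complex.ofReal_mul, Real.mul_self_sqrt (hw i)]
  have hxsq : ∀ i, ((Real.sqrt (x i) : ℝ) : ℂ) * ((Real.sqrt (x i) : ℝ) : ℂ) = (x i : ℂ) := by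
    intro i; rw [← Complex.ofReal_mul, Real.mul_self_sqrt (hx i)]
  have hsumC : ∑ i, (w i : ℂ) = 1 := by exact_mod_cast hsum
  have T00 : T none none = 1 := by
    simp [hT, hA, Matrix.mul_apply, arrowFactor, hwsq, hsumC]
  have T0s : ∀ j, T none (some j) = ((Real.sqrt (w j) : ℝ) : ℂ) * ((Real.sqrt (x j) : ℝ) : ℂ) := by
    intro j; simp [hT, hA, Matrix.mul_apply, arrowFactor]
  have Ts0 : ∀ j, T (some j) none = ((Real.sqrt (x j) : ℝ) : ℂ) * ((Real.sqrt (w j) : ℝ) : ℂ) := by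
    intro j; simp [hT, hA, Matrix.mul_apply, arrowFactor, apply_ite]
  have Tss : ∀ i j, T (some i) (some j) = if i = j then (x i : ℂ) else 0 := by
    intro i j
    by_cases h : i = j
    · subst h; simp [hT, hA, Matrix.mul_apply, arrowFactor, apply_ite, hxsq]
    · simp [hT, hA, Matrix.mul_apply, arrowFactor, apply_ite, h, eq_comm]
  set U : Matrix (Option ι) (Option ι) ℂ := hH.eigenvectorUnitary.1 with hU
  set l := hH.eigenvalues with hl
  have hUU : U * Uᴴ = 1 := by
    have := (Matrix.mem_unitaryGroup_iff).1 hH.eigenvectorUnitary.2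
    simpa [Matrix.star_eq_conjTranspose] using this
  have hUU' : Uᴴ * U = 1 := by
    have := (Matrix.mem_unitaryGroup_iff').1 hH.eigenvectorUnitary.2
    simpa [Matrix.star_eq_conjTranspose] using this
  have hspec : T = U * Matrix.diagonal (fun k => (l k : ℂ)) * Uᴴ := by
    have := hH.spectral_theorem
    rw [Unitary.conjStarAlgAut_apply] at this
    exact this
  have hUT : Uᴴ * T = Matrix.diagonal (fun k => (l k : ℂ)) * Uᴴ := by
    rw [hspec, ← Matrix.mul_assoc, ← Matrix.mul_assoc, hUU', Matrix.one_mul]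
  have hnorm : ∀ k, ((Complex.normSq (U none k) : ℝ) : ℂ) = U none k * star (U none k) := by
    intro k; exact (Complex.mul_conj _).symm
  refine ⟨fun k => Complex.normSq (U none k), l, fun k => Complex.normSq_nonneg _,
    fun k => hpsd.eigenvalues_nonneg k, ?_, ?_, ?_⟩
  · have := congrFun (congrFun hUU none) none
    rw [Matrix.mul_apply] at this
    simp only [Matrix.conjTranspose_apply, ← hnorm, Matrix.one_apply_eq] at this
    exact_mod_cast this
  · have := congrFun (congrFun hspec none) none
    rw [T00, Matrix.mul_apply] at this
    simp only [Matrix.mul_diagonal, Matrix.conjTranspose_apply] at this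
    have h2 : (1 : ℂ) = ∑ k, ((Complex.normSq (U none k) : ℝ) : ℂ) * (l k : ℂ) := by
      rw [this]
      refine Finset.sum_congr rfl fun k _ => ?_
      rw [hnorm]; ring
    exact_mod_cast h2.symm
  · intro z hz hG
    set G := ∑ i, (w i : ℂ) * (z - (x i : ℂ))⁻¹ with hGdef
    have hz0 : z ≠ 0 := by intro h; simp [h] at hz
    have hG1 : 1 - G ≠ 0 := sub_ne_zero.2 hG.symm
    set y0 : ℂ := 1 / (z * (1 - G)) with hy0
    let y : Option ι → ℂ := fun j => match j with
      | none => y0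
      | some i => ((Real.sqrt (w i) : ℝ) : ℂ) * ((Real.sqrt (x i) : ℝ) : ℂ) * y0 * (z - (x i : ℂ))⁻¹
    have hy : z • y - T *ᵥ y = Pi.single none 1 := by
      funext j
      cases j with
      | none =>
        simp only [Pi.sub_apply, Pi.smul_apply, Matrix.mulVec, dotProduct, Fintype.sum_option,
          T00, T0s, y, Pi.single_eq_same, smul_eq_mul]
        have h1 : ∀ i, ((Real.sqrt (w i) : ℝ) : ℂ) * ((Real.sqrt (x i) : ℝ) : ℂ) *
            (((Real.sqrt (w i) : ℝ) : ℂ) * ((Real.sqrt (x i) : ℝ) : ℂ) * y0 * (z - (x i : ℂ))⁻¹)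
            = y0 * (z * ((w i : ℂ) * (z - (x i : ℂ))⁻¹) - w i) := by
          intro i
          have hne := sub_ofReal_ne_zero hz (x i)
          calc _ = (((Real.sqrt (w i) : ℝ) : ℂ) * ((Real.sqrt (w i) : ℝ) : ℂ)) *
            (((Real.sqrt (x i) : ℝ) : ℂ) * ((Real.sqrt (x i) : ℝ) : ℂ)) * y0 * (z - (x i : ℂ))⁻¹ := by
                ring
            _ = _ := by rw [hwsq, hxsq]; field_simp; ring
        simp only [h1, ← Finset.mul_sum, Finset.sum_sub_distrib, hsumC, ← hGdef]
        rw [hy0]; field_simp; ring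
      | some i =>
        have hne := sub_ofReal_ne_zero hz (x i)
        simp only [Pi.sub_apply, Pi.smul_apply, Matrix.mulVec, dotProduct, Fintype.sum_option,
          Ts0, Tss, y, smul_eq_mul, ite_mul, zero_mul, Finset.sum_ite_eq, Finset.mem_univ, if_true]
        simp
        field_simp; ring
    have hc : ∀ k, (z - (l k : ℂ)) * (Uᴴ *ᵥ y) k = star (U none k) := by
      intro k
      have h1 := congrArg (fun v => (Uᴴ *ᵥ v) k) hy
      simp only [Matrix.mulVec_sub, Matrix.mulVec_smul, Matrix.mulVec_mulVec, hUT] at h1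
      rw [← Matrix.mulVec_mulVec] at h1
      simp only [Pi.sub_apply, Pi.smul_apply, smul_eq_mul, Matrix.mulVec_diagonal,
        Matrix.mulVec_single_one, Matrix.col_apply, Matrix.conjTranspose_apply] at h1
      rw [← h1]; ring
    have hfin : y0 = (U *ᵥ (Uᴴ *ᵥ y)) none := by
      rw [Matrix.mulVec_mulVec, hUU, Matrix.one_mulVec]
    rw [hfin, Matrix.mulVec, dotProduct]
    refine Finset.sum_congr rfl fun k _ => ?_
    rw [hnorm, ← hc k]
    have hne := sub_ofReal_ne_zero hz (l k)
    field_simp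

theorem continuous_kernel {z : ℂ} (hz : 0 < z.im) :
    Continuous (fun x : ℝ => (z - (x : ℂ))⁻¹) :=
  Continuous.inv₀ (by fun_prop) (fun x => sub_ofReal_ne_zero hz x)

theorem kernel_bound {z : ℂ} (hz : 0 < z.im) (x : ℝ) : ‖(z - (x : ℂ))⁻¹‖ ≤ (z.im)⁻¹ := by
  rw [norm_inv]
  apply inv_anti₀ hz
  have := Complex.abs_im_le_norm (z - (x : ℂ))
  simp at this
  exact (le_abs_self _).trans this

theorem kernel_integrable (μ : Measure ℝ) [IsProbabilityMeasure μ] {z : ℂ} (hz : 0 < z.im) :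
    Integrable (fun x : ℝ => (z - (x : ℂ))⁻¹) μ :=
  Integrable.of_bound (continuous_kernel hz).aestronglyMeasurable (z.im)⁻¹
    (Eventually.of_forall (kernel_bound hz))

theorem cauchyG_ne_one (μ : Measure ℝ) [IsProbabilityMeasure μ] {z : ℂ} (hz : 0 < z.im) :
    cauchyG μ z ≠ 1 := by
  intro h
  have hint := kernel_integrable μ hz
  have h1 : ∫ x : ℝ, -((z - (x : ℂ))⁻¹).im ∂μ = 0 := by
    rw [integral_neg]
    have := integral_im (𝕜 := ℂ) hint
    simp only [RCLike.im_to_complex] at this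
    rw [this]
    rw [cauchyG] at h
    rw [h]; simp
  have hpos : ∀ x : ℝ, 0 < -((z - (x : ℂ))⁻¹).im := by
    intro x
    have hne := sub_ofReal_ne_zero hz x
    have : 0 < Complex.normSq (z - (x : ℂ)) := Complex.normSq_pos.2 hne
    rw [Complex.inv_im]
    simp only [Complex.sub_im, Complex.ofReal_im, sub_zero, neg_div, neg_neg]
    positivity
  rw [integral_eq_zero_iff_of_nonneg (fun x => (hpos x).le) hint.im.neg] at h1
  have hF : ∀ᵐ x ∂μ, False := h1.mono fun x hx => (hpos x).ne' hx
  simp at hF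
  exact IsProbabilityMeasure.ne_zero μ hF

/-- The theorem for a measure which is the image of a probability measure on a finite type. -/
theorem finite_measure_case {ι : Type} [Fintype ι] [DecidableEq ι] [MeasurableSpace ι]
    [MeasurableSingletonClass ι] (ρ : Measure ι) [IsProbabilityMeasure ρ] (x : ι → ℝ)
    (hx : ∀ i, 0 ≤ x i) :
    ∃ ν : ProbabilityMeasure ℝ, (ν : Measure ℝ) (Set.Iio 0) = 0 ∧
      ∫⁻ t, ‖t‖ₑ ∂(ν : Measure ℝ) ≤ 1 ∧
      ∀ z : ℂ, 0 < z.im →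
        cauchyG (ν : Measure ℝ) z = 1 / (z * (1 - cauchyG (ρ.map x) z)) := by
  have hxm : Measurable x := measurable_of_finite x
  obtain ⟨p, l, hp, hl, hp1, hpl, hres⟩ := finite_case (fun i => ρ.real {i}) x
    (fun i => measureReal_nonneg) hx (by simp)
  let ν : Measure ℝ := ∑ k, ENNReal.ofReal (p k) • Measure.dirac (l k)
  have hν : IsProbabilityMeasure ν := by
    constructor
    simp only [ν, Measure.finsetSum_apply, Measure.smul_apply, measure_univ, smul_eq_mul, mul_one]
    rw [← ENNReal.ofReal_sum_of_nonneg (fun k _ => hp k), hp1, ENNReal.ofReal_one]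
  have hmap : IsProbabilityMeasure (ρ.map x) := Measure.isProbabilityMeasure_map hxm.aemeasurable
  refine ⟨⟨ν, hν⟩, ?_, ?_, ?_⟩
  · simp only [ν, ProbabilityMeasure.coe_mk, Measure.finsetSum_apply, Measure.smul_apply, smul_eq_mul]
    refine Finset.sum_eq_zero fun k _ => ?_
    rw [Measure.dirac_apply' _ measurableSet_Iio]
    simp [hl k]
  · simp only [ν, ProbabilityMeasure.coe_mk, lintegral_finsetSum_measure, lintegral_smul_measure,
      lintegral_dirac, smul_eq_mul]
    have : ∀ k, ENNReal.ofReal (p k) * ‖l k‖ₑ = ENNReal.ofReal (p k * l k) := by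
      intro k
      rw [ENNReal.ofReal_mul (hp k), Real.enorm_of_nonneg (hl k)]
    simp only [this]
    rw [← ENNReal.ofReal_sum_of_nonneg (fun k _ => mul_nonneg (hp k) (hl k)), hpl,
      ENNReal.ofReal_one]
  · intro z hz
    have hG : cauchyG (ρ.map x) z = ∑ i, ((ρ.real {i} : ℝ) : ℂ) * (z - (x i : ℂ))⁻¹ := by
      rw [cauchyG, integral_map hxm.aemeasurable (continuous_kernel hz).aestronglyMeasurable,
        integral_fintype .of_finite]
      simp
    have h1 := cauchyG_ne_one (ρ.map x) hz
    rw [hG] at h1 ⊢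
    rw [← hres z hz h1]
    simp only [ν, ProbabilityMeasure.coe_mk, cauchyG]
    rw [integral_finsetSum_measure]
    · refine Finset.sum_congr rfl fun k _ => ?_
      rw [integral_smul_measure, integral_dirac, ENNReal.toReal_ofReal (hp k)]
      simp
    · intro k _
      exact Integrable.smul_measure (kernel_integrable _ hz) ENNReal.ofReal_ne_top

theorem tight_of_moment {S : Set (Measure ℝ)} (h : ∀ ν ∈ S, ∫⁻ t, ‖t‖ₑ ∂ν ≤ 1) :
    IsTightMeasureSet S := by
  rw [isTightMeasureSet_iff_exists_isCompact_measure_compl_le]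
  intro ε hε
  obtain ⟨n, hn⟩ := ENNReal.exists_inv_nat_lt hε.ne'
  have hn0 : n ≠ 0 := by rintro rfl; simp at hn
  refine ⟨Metric.closedBall 0 n, isCompact_closedBall _ _, fun ν hν => ?_⟩
  refine le_trans ?_ hn.le
  have hsub : (Metric.closedBall (0 : ℝ) n)ᶜ ⊆ {t | (n : ENNReal) ≤ ‖t‖ₑ} := by
    intro t ht
    simp only [Set.mem_compl_iff, Metric.mem_closedBall, dist_zero_right, not_le] at ht
    simp only [Set.mem_ofPred_eq, ← ofReal_norm]
    rw [← ENNReal.ofReal_natCast]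
    exact ENNReal.ofReal_le_ofReal ht.le
  calc _ ≤ ν {t | (n : ENNReal) ≤ ‖t‖ₑ} := measure_mono hsub
    _ ≤ (∫⁻ t, ‖t‖ₑ ∂ν) / n :=
      meas_ge_le_lintegral_div (by fun_prop) (by exact_mod_cast hn0) (by simp)
    _ ≤ 1 / n := by gcongr; exact h ν hν
    _ = _ := one_div _

theorem exists_measure_reciprocal_transform (μ : Measure ℝ)
    (hμ : IsProbabilityMeasure μ) (hsupp : μ (Set.Iio (0 : ℝ)) = 0) :
    ∃ μ₁ : Measure ℝ, IsProbabilityMeasure μ₁ ∧ μ₁ (Set.Iio (0 : ℝ)) = 0 ∧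
      ∀ z : ℂ, 0 < z.im →
        cauchyG μ₁ z = 1 / (z * (1 - cauchyG μ z)) := by
  let f : ℕ → SimpleFunc ℝ ℝ := fun n =>
    SimpleFunc.approxOn id measurable_id (Set.Ici 0) 0 (by simp) n
  have hf0 : ∀ n t, 0 ≤ f n t := fun n t =>
    SimpleFunc.approxOn_mem measurable_id (s := Set.Ici (0 : ℝ)) (by simp) n t
  have hae : ∀ᵐ t ∂μ, 0 ≤ t := by
    rw [ae_iff]
    convert hsupp using 2
    ext t; simp
  have hlim : ∀ᵐ t ∂μ, Tendsto (fun n => f n t) atTop (𝓝 t) := by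
    filter_upwards [hae] with t ht
    exact SimpleFunc.tendsto_approxOn measurable_id (s := Set.Ici (0 : ℝ)) (by simp)
      (subset_closure ht)
  have hG : ∀ z : ℂ, 0 < z.im →
      Tendsto (fun n => cauchyG (μ.map (f n)) z) atTop (𝓝 (cauchyG μ z)) := by
    intro z hz
    have : ∀ n, cauchyG (μ.map (f n)) z = ∫ t, (z - ((f n t : ℝ) : ℂ))⁻¹ ∂μ := fun n =>
      integral_map (f n).measurable.aemeasurable (continuous_kernel hz).aestronglyMeasurable
    simp only [this]
    refine tendsto_integral_of_dominated_convergence (fun _ => (z.im)⁻¹) (fun n => ?_)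
      (integrable_const _) (fun n => Eventually.of_forall fun t => kernel_bound hz _) ?_
    · exact ((continuous_kernel hz).measurable.comp (f n).measurable).aestronglyMeasurable
    · filter_upwards [hlim] with t ht
      exact ((continuous_kernel hz).tendsto t).comp ht
  have hex : ∀ n, ∃ ν : ProbabilityMeasure ℝ, (ν : Measure ℝ) (Set.Iio 0) = 0 ∧
      ∫⁻ t, ‖t‖ₑ ∂(ν : Measure ℝ) ≤ 1 ∧
      ∀ z : ℂ, 0 < z.im →
        cauchyG (ν : Measure ℝ) z = 1 / (z * (1 - cauchyG (μ.map (f n)) z)) := by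
    intro n
    let g : ℝ → (f n).range := fun t => ⟨f n t, (f n).mem_range_self t⟩
    have hg : Measurable g := (f n).measurable.subtype_mk
    have : IsProbabilityMeasure (μ.map g) := Measure.isProbabilityMeasure_map hg.aemeasurable
    have h := finite_measure_case (μ.map g) (fun i => (i : ℝ)) (by
      rintro ⟨i, hi⟩
      obtain ⟨t, rfl⟩ := SimpleFunc.mem_range.1 hi
      exact hf0 n t)
    rw [Measure.map_map (measurable_of_finite _) hg] at h
    exact h
  choose ν hν0 hν1 hνG using hex
  have hcomp : IsCompact (closure (Set.range ν)) := by
    apply isCompact_closure_of_isTightMeasureSet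
    apply tight_of_moment
    rintro _ ⟨_, ⟨n, rfl⟩, rfl⟩
    exact hν1 n
  obtain ⟨ν', -, hν'⟩ := hcomp.ultrafilter_le_nhds ((hyperfilter ℕ).map ν) (by
    rw [le_principal_iff]
    exact Filter.mem_of_superset (Filter.range_mem_map) subset_closure)
  have ht : Tendsto ν (hyperfilter ℕ : Filter ℕ) (𝓝 ν') := hν'
  refine ⟨ν', inferInstance, ?_, ?_⟩
  · have := ProbabilityMeasure.le_liminf_measure_open_of_tendsto ht (isOpen_Iio (a := (0 : ℝ)))
    simp only [hν0] at this
    simpa using this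
  · intro z hz
    have h1 := (ProbabilityMeasure.tendsto_iff_forall_integral_rclike_tendsto ℂ).1 ht
      (BoundedContinuousFunction.ofNormedAddCommGroup _ (continuous_kernel hz) _ (kernel_bound hz))
    simp only [BoundedContinuousFunction.coe_ofNormedAddCommGroup] at h1
    have h2 := (hG z hz).mono_left Nat.hyperfilter_le_atTop
    have hz0 : z ≠ 0 := by intro h; simp [h] at hz
    have hne : z * (1 - cauchyG μ z) ≠ 0 :=
      mul_ne_zero hz0 (sub_ne_zero.2 (cauchyG_ne_one μ hz).symm)
    have h3 : Tendsto (fun n => 1 / (z * (1 - cauchyG (μ.map (f n)) z)))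
        (hyperfilter ℕ : Filter ℕ) (𝓝 (1 / (z * (1 - cauchyG μ z)))) :=
      tendsto_const_nhds.div ((h2.const_sub 1).const_mul z) hne
    refine tendsto_nhds_unique h1 (h3.congr fun n => ?_)
    exact (hνG n z hz).symm
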